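/- arXiv:1806.09298 — 5 statements merged into one kernel-verified Lean document; each statement's English description precedes it below -/
import Mathlib

section
/- Every projective module over the group algebra K[G] of a cyclic group G of order p^k over a field K of characteristic p > 0 is a free K[G]-module. -/
theorem sup_aux {R M : Type*} [CommRing R] [AddCommGroup M] [Module R M]
    (N : Submodule R M) (I : Ideal R) (h1 : N ⊔ I • (⊤ : Submodule R M) = ⊤) (n : ℕ) :
    N ⊔ I ^ n • (⊤ : Submodule R M) = ⊤ := by
  induction n with
  | zero => simp
  | succ n ih =>
    have h3 : I • (⊤ : Submodule R M) ≤ N ⊔ I ^ (n + 1) • (⊤ : Submodule R M) := by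
      calc I • (⊤ : Submodule R M) = I • (N ⊔ I ^ n • (⊤ : Submodule R M)) := by rw [ih]
        _ = I • N ⊔ I ^ (n + 1) • (⊤ : Submodule R M) := by
          rw [Submodule.smul_sup, ← Submodule.mul_smul, ← pow_succ']
        _ ≤ _ := sup_le_sup_right Submodule.smul_le_right _
    exact eq_top_iff.2 (h1.ge.trans (sup_le le_sup_left h3))

open TensorProduct in
theorem free_aux {R M : Type*} [CommRing R] [IsLocalRing R] [AddCommGroup M] [Module R M]
    [Module.Flat R M] (hn : IsNilpotent (IsLocalRing.maximalIdeal R)) : Module.Free R M := by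
  let k := IsLocalRing.ResidueField R
  let w := Module.Free.chooseBasis k (k ⊗[R] M)
  have hs : Function.Surjective (TensorProduct.mk R k M 1) :=
    TensorProduct.mk_surjective R M k Ideal.Quotient.mk_surjective
  obtain ⟨v, eq⟩ := hs.comp_left w
  have hli : LinearIndependent R v :=
    Module.IsLocalRing.linearIndependent_of_flat v (by
      have := w.linearIndependent
      rw [← eq] at this
      exact this)
  refine .of_basis (.mk hli ?_)
  set N := Submodule.span R (Set.range v) with hN
  have h1 : N ⊔ IsLocalRing.maximalIdeal R • (⊤ : Submodule R M) = ⊤ := by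
    have hk : LinearMap.ker (TensorProduct.mk R k M 1) =
        IsLocalRing.maximalIdeal R • (⊤ : Submodule R M) :=
      LinearMap.ker_tensorProductMk ..
    rw [← hk, ← Submodule.comap_map_eq, hN, Submodule.map_span, ← Set.range_comp]
    have : (TensorProduct.mk R k M 1) ∘ v = w := eq
    rw [this, ← Submodule.restrictScalars_span R k Ideal.Quotient.mk_surjective, w.span_eq]
    simp
  have h2 := sup_aux N _ h1
  obtain ⟨n, hn⟩ := hn
  have := h2 n
  rw [hn] at this
  simpa using this.ge

theorem local_aux {K : Type*} [Field K] {p : ℕ} [Fact p.Prime] [CharP K p]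
    {G : Type*} [CommGroup G] [Fintype G] (k : ℕ)
    (hcard : Fintype.card G = p ^ k) : IsLocalRing (MonoidAlgebra K G) := by
  have : CharP (MonoidAlgebra K G) p := charP_of_injective_algebraMap
    (algebraMap K (MonoidAlgebra K G)).injective p
  let ε : MonoidAlgebra K G →ₐ[K] K := MonoidAlgebra.lift K K G 1
  have hε : ∀ x : MonoidAlgebra K G, x ^ p ^ k = algebraMap K _ (ε x ^ p ^ k) := by
    intro x
    induction x using MonoidAlgebra.induction_on with
    | of g =>
      have : g ^ p ^ k = 1 := by rw [← hcard, pow_card_eq_one]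
      rw [← map_pow, this]
      simp [ε]
    | add x y hx hy => rw [add_pow_char_pow, hx, hy, map_add, add_pow_char_pow, map_add]
    | smul r x hx => rw [smul_pow, hx, map_smul, smul_eq_mul, mul_pow, map_mul, Algebra.smul_def, map_pow]
  have hu : ∀ x : MonoidAlgebra K G, ε x ≠ 0 → IsUnit x := by
    intro x hx
    have h : IsUnit (x ^ p ^ k) := by
      rw [hε]
      exact (IsUnit.mk0 _ (pow_ne_zero _ hx)).map _
    exact (isUnit_pow_iff (pow_ne_zero _ (Fact.out : p.Prime).ne_zero)).1 h
  refine IsLocalRing.of_isUnit_or_isUnit_one_sub_self fun x => ?_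
  by_cases hx : ε x = 0
  · exact .inr (hu _ (by simp [hx]))
  · exact .inl (hu _ hx)

theorem main_aux {K : Type*} [Field K] {p : ℕ} [Fact p.Prime] [CharP K p]
    {G : Type*} [CommGroup G] [Fintype G] (k : ℕ)
    (hcard : Fintype.card G = p ^ k)
    (M : Type*) [AddCommGroup M] [Module (MonoidAlgebra K G) M]
    (hproj : Module.Projective (MonoidAlgebra K G) M) :
    Module.Free (MonoidAlgebra K G) M := by
  have := local_aux (K := K) k hcard
  have : Module.Finite K (MonoidAlgebra K G) := inferInstance
  have : IsArtinianRing (MonoidAlgebra K G) := IsArtinianRing.of_finite K _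
  exact free_aux ((isArtinianRing_iff_isNilpotent_maximalIdeal _).1 this)

/-- every projective module over the group algebra `K[G]` of a cyclic group
`G` of order `p^k` over a field `K` of characteristic `p > 0` is a free `K[G]`-module. -/
theorem statement2 {K : Type*} [Field K] {p : ℕ} [Fact p.Prime] [CharP K p]
    {G : Type*} [Group G] [Fintype G] (hG : IsCyclic G) (k : ℕ)
    (hcard : Fintype.card G = p ^ k)
    (M : Type*) [AddCommGroup M] [Module (MonoidAlgebra K G) M]
    (hproj : Module.Projective (MonoidAlgebra K G) M) :
    Module.Free (MonoidAlgebra K G) M := by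
  letI : CommGroup G := { ‹Group G› with mul_comm := (IsCyclic.commGroup (α := G)).mul_comm }
  exact main_aux k hcard M hproj
end

section
/- Both u and u' have order 8 in GL_10(K); that is, u⁸ = I, u⁴ ≠ I, u'⁸ = I, and u'⁴ ≠ I. -/
open Matrix

/-- `E i j`: the 10×10 matrix with a single `1` in position `(i, j)`. -/
def Emat (K : Type*) [Field K] (i j : Fin 10) : Matrix (Fin 10) (Fin 10) K :=
  Matrix.single i j 1

/-- The antidiagonal Gram matrix `J` of the alternating form `β(v, w) = vᵀ J w`. -/
def Jmat (K : Type*) [Field K] : Matrix (Fin 10) (Fin 10) K :=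
  Matrix.of fun i j => if (i : ℕ) + (j : ℕ) = 9 then 1 else 0

/-- The generator `A = I + E₁,₅ + E₁,₁₀ + E₆,₁₀` (1-indexed). -/
def Amat (K : Type*) [Field K] : Matrix (Fin 10) (Fin 10) K :=
  1 + Emat K 0 4 + Emat K 0 9 + Emat K 5 9

/-- The generator `B = E₂,₁ + E₃,₂ + E₄,₃ + E₅,₄ + E₁₀,₅ + E₉,₁₀ + E₈,₉ + E₇,₈ + E₆,₇ + E₁,₆`
(1-indexed). -/
def Bmat (K : Type*) [Field K] : Matrix (Fin 10) (Fin 10) K :=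
  Emat K 1 0 + Emat K 2 1 + Emat K 3 2 + Emat K 4 3 + Emat K 9 4 +
    Emat K 8 9 + Emat K 7 8 + Emat K 6 7 + Emat K 5 6 + Emat K 0 5

/-- `u = B⁴AB⁶AB⁵A`. -/
def uMat (K : Type*) [Field K] : Matrix (Fin 10) (Fin 10) K :=
  Bmat K ^ 4 * Amat K * Bmat K ^ 6 * Amat K * Bmat K ^ 5 * Amat K

/-- `u' = BAB²AB⁴AB³A`. -/
def u'Mat (K : Type*) [Field K] : Matrix (Fin 10) (Fin 10) K :=
  Bmat K * Amat K * Bmat K ^ 2 * Amat K * Bmat K ^ 4 * Amat K * Bmat K ^ 3 * Amat K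

/-- The matrix over `ZMod 2` whose row `i` has the binary digits of `f i` as entries. -/
def ofBits (f : Fin 10 → ℕ) : Matrix (Fin 10) (Fin 10) (ZMod 2) :=
  Matrix.of fun i j => if (f i).testBit (j : ℕ) then 1 else 0

def mA : Matrix (Fin 10) (Fin 10) (ZMod 2) := ofBits ![529, 2, 4, 8, 16, 544, 64, 128, 256, 512]

def mB : Matrix (Fin 10) (Fin 10) (ZMod 2) := ofBits ![32, 1, 2, 4, 8, 64, 128, 256, 512, 16]

def mB2 : Matrix (Fin 10) (Fin 10) (ZMod 2) := ofBits ![64, 32, 1, 2, 4, 128, 256, 512, 16, 8]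

def mB3 : Matrix (Fin 10) (Fin 10) (ZMod 2) := ofBits ![128, 64, 32, 1, 2, 256, 512, 16, 8, 4]

def mB4 : Matrix (Fin 10) (Fin 10) (ZMod 2) := ofBits ![256, 128, 64, 32, 1, 512, 16, 8, 4, 2]

def mB5 : Matrix (Fin 10) (Fin 10) (ZMod 2) := ofBits ![512, 256, 128, 64, 32, 16, 8, 4, 2, 1]

def mB6 : Matrix (Fin 10) (Fin 10) (ZMod 2) := ofBits ![16, 512, 256, 128, 64, 8, 4, 2, 1, 32]

lemma mB2_eq : mB * mB = mB2 := by decide +kernel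

lemma mB3_eq : mB2 * mB = mB3 := by decide +kernel

lemma mB4_eq : mB3 * mB = mB4 := by decide +kernel

lemma mB5_eq : mB4 * mB = mB5 := by decide +kernel

lemma mB6_eq : mB5 * mB = mB6 := by decide +kernel

def mU1 : Matrix (Fin 10) (Fin 10) (ZMod 2) := ofBits ![256, 128, 64, 544, 529, 512, 16, 8, 4, 2]

lemma mU1_eq : mB4 * mA = mU1 := by decide +kernel

def mU2 : Matrix (Fin 10) (Fin 10) (ZMod 2) := ofBits ![1, 2, 4, 40, 112, 32, 64, 128, 256, 512]

lemma mU2_eq : mU1 * mB6 = mU2 := by decide +kernel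

def mU3 : Matrix (Fin 10) (Fin 10) (ZMod 2) := ofBits ![529, 2, 4, 552, 624, 544, 64, 128, 256, 512]

lemma mU3_eq : mU2 * mA = mU3 := by decide +kernel

def mU4 : Matrix (Fin 10) (Fin 10) (ZMod 2) := ofBits ![545, 256, 128, 81, 57, 17, 8, 4, 2, 1]

lemma mU4_eq : mU3 * mB5 = mU4 := by decide +kernel

def mU5 : Matrix (Fin 10) (Fin 10) (ZMod 2) := ofBits ![561, 256, 128, 577, 41, 513, 8, 4, 2, 529]

lemma mU5_eq : mU4 * mA = mU5 := by decide +kernel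

def mUpow2 : Matrix (Fin 10) (Fin 10) (ZMod 2) := ofBits ![520, 2, 4, 40, 625, 32, 577, 128, 256, 9]

lemma mUpow2_eq : mU5 * mU5 = mUpow2 := by decide +kernel

def mUpow4 : Matrix (Fin 10) (Fin 10) (ZMod 2) := ofBits ![33, 2, 4, 8, 529, 32, 64, 128, 256, 544]

lemma mUpow4_eq : mUpow2 * mUpow2 = mUpow4 := by decide +kernel

lemma mUpow8_eq : mUpow4 * mUpow4 = 1 := by decide +kernel

lemma mUpow4_ne : mUpow4 ≠ 1 := by decide +kernel

def mV1 : Matrix (Fin 10) (Fin 10) (ZMod 2) := ofBits ![544, 529, 2, 4, 8, 64, 128, 256, 512, 16]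

lemma mV1_eq : mB * mA = mV1 := by decide +kernel

def mV2 : Matrix (Fin 10) (Fin 10) (ZMod 2) := ofBits ![136, 76, 32, 1, 2, 256, 512, 16, 8, 4]

lemma mV2_eq : mV1 * mB2 = mV2 := by decide +kernel

def mV3 : Matrix (Fin 10) (Fin 10) (ZMod 2) := ofBits ![136, 76, 544, 529, 2, 256, 512, 16, 8, 4]

lemma mV3_eq : mV2 * mA = mV3 := by decide +kernel

def mV4 : Matrix (Fin 10) (Fin 10) (ZMod 2) := ofBits ![40, 112, 514, 259, 128, 4, 2, 1, 32, 64]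

lemma mV4_eq : mV3 * mB4 = mV4 := by decide +kernel

def mV5 : Matrix (Fin 10) (Fin 10) (ZMod 2) := ofBits ![552, 624, 514, 787, 128, 4, 2, 529, 544, 64]

lemma mV5_eq : mV4 * mA = mV5 := by decide +kernel

def mV6 : Matrix (Fin 10) (Fin 10) (ZMod 2) := ofBits ![261, 774, 68, 206, 16, 32, 64, 134, 260, 512]

lemma mV6_eq : mV5 * mB3 = mV6 := by decide +kernel

def mV7 : Matrix (Fin 10) (Fin 10) (ZMod 2) := ofBits ![789, 774, 68, 206, 16, 544, 64, 134, 260, 512]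

lemma mV7_eq : mV6 * mA = mV7 := by decide +kernel

def mVpow2 : Matrix (Fin 10) (Fin 10) (ZMod 2) := ofBits ![69, 70, 4, 842, 16, 32, 64, 964, 320, 512]

lemma mVpow2_eq : mV7 * mV7 = mVpow2 := by decide +kernel

def mVpow4 : Matrix (Fin 10) (Fin 10) (ZMod 2) := ofBits ![1, 2, 4, 12, 16, 32, 64, 192, 256, 512]

lemma mVpow4_eq : mVpow2 * mVpow2 = mVpow4 := by decide +kernel

lemma mVpow8_eq : mVpow4 * mVpow4 = 1 := by decide +kernel

lemma mVpow4_ne : mVpow4 ≠ 1 := by decide +kernel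

lemma mBpow2 : mB ^ 2 = mB2 := by
  rw [pow_succ, pow_one, mB2_eq]

lemma mBpow3 : mB ^ 3 = mB3 := by
  rw [pow_succ, mBpow2, mB3_eq]

lemma mBpow4 : mB ^ 4 = mB4 := by
  rw [pow_succ, mBpow3, mB4_eq]

lemma mBpow5 : mB ^ 5 = mB5 := by
  rw [pow_succ, mBpow4, mB5_eq]

lemma mBpow6 : mB ^ 6 = mB6 := by
  rw [pow_succ, mBpow5, mB6_eq]

lemma Amat_two : Amat (ZMod 2) = mA := by decide +kernel

lemma Bmat_two : Bmat (ZMod 2) = mB := by decide +kernel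

lemma uMat_two : uMat (ZMod 2) = mU5 := by
  rw [uMat, Amat_two, Bmat_two, mBpow4, mBpow5, mBpow6, mU1_eq, mU2_eq, mU3_eq, mU4_eq, mU5_eq]

lemma u'Mat_two : u'Mat (ZMod 2) = mV7 := by
  rw [u'Mat, Amat_two, Bmat_two, mBpow2, mBpow3, mBpow4, mV1_eq, mV2_eq, mV3_eq, mV4_eq, mV5_eq, mV6_eq, mV7_eq]

lemma mU_pow4 : mU5 ^ 4 = mUpow4 := by
  rw [show 4 = 2 * 2 from rfl, pow_mul, pow_two, pow_two, mUpow2_eq, mUpow4_eq]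

lemma mV_pow4 : mV7 ^ 4 = mVpow4 := by
  rw [show 4 = 2 * 2 from rfl, pow_mul, pow_two, pow_two, mVpow2_eq, mVpow4_eq]

lemma mU_pow8 : mU5 ^ 8 = 1 := by
  rw [show 8 = 4 * 2 from rfl, pow_mul, mU_pow4, pow_two, mUpow8_eq]

lemma mV_pow8 : mV7 ^ 8 = 1 := by
  rw [show 8 = 4 * 2 from rfl, pow_mul, mV_pow4, pow_two, mVpow8_eq]

section BaseChange

variable (K : Type*) [Field K] (φ : ZMod 2 →+* K)

lemma map_Emat (i j : Fin 10) : φ.mapMatrix (Emat (ZMod 2) i j) = Emat K i j := by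
  simp [Emat, Matrix.map_single]

lemma map_Amat : φ.mapMatrix (Amat (ZMod 2)) = Amat K := by
  simp only [Amat, map_add, map_one, map_Emat]

lemma map_Bmat : φ.mapMatrix (Bmat (ZMod 2)) = Bmat K := by
  simp only [Bmat, map_add, map_Emat]

lemma map_uMat : φ.mapMatrix (uMat (ZMod 2)) = uMat K := by
  simp only [uMat, map_mul, map_pow, map_Amat, map_Bmat]

lemma map_u'Mat : φ.mapMatrix (u'Mat (ZMod 2)) = u'Mat K := by
  simp only [u'Mat, map_mul, map_pow, map_Amat, map_Bmat]

end BaseChange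

/-- both `u` and `u'` have order `8` in `GL₁₀(K)`:
`u⁸ = I`, `u⁴ ≠ I`, `u'⁸ = I`, `u'⁴ ≠ I`. -/
theorem statement7 (K : Type*) [Field K] [CharP K 2] :
    uMat K ^ 8 = 1 ∧ uMat K ^ 4 ≠ 1 ∧ u'Mat K ^ 8 = 1 ∧ u'Mat K ^ 4 ≠ 1 := by
  have inj : Function.Injective (ZMod.castHom (dvd_refl 2) K).mapMatrix :=
    Matrix.map_injective (m := Fin 10) (n := Fin 10)
      (ZMod.castHom (dvd_refl 2) K).injective
  rw [← map_uMat K (ZMod.castHom (dvd_refl 2) K), ← map_u'Mat K (ZMod.castHom (dvd_refl 2) K),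
    uMat_two, u'Mat_two, ← map_pow, ← map_pow, ← map_pow, ← map_pow, mU_pow8, mV_pow8,
    mU_pow4, mV_pow4, map_one]
  refine ⟨rfl, fun h => mUpow4_ne ?_, rfl, fun h => mVpow4_ne ?_⟩
  · exact inj (h.trans (map_one _).symm)
  · exact inj (h.trans (map_one _).symm)
end

section
/- Let X = u − I. There exists v ∈ V with X²v = 0 and β(v, Xv) ≠ 0. (Hence Hesselink's invariant χ(2) of u equals 1, so u lies in the symplectic unipotent class labelled (2₁², 6₃).) -/
open Matrix

theorem Emat_mulVec (K : Type*) [Field K] (i j : Fin 10) (x : Fin 10 → K) :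
    (Emat K i j).mulVec x = Pi.single i (x j) := by
  unfold Emat
  rw [Matrix.single_mulVec]
  simp [Pi.single]

theorem A_mulVec (K : Type*) [Field K] (a b c d e f g h i j : K) :
    (Amat K).mulVec ![a, b, c, d, e, f, g, h, i, j] =
      ![a + e + j, b, c, d, e, f + j, g, h, i, j] := by
  unfold Amat
  simp only [Matrix.add_mulVec, Emat_mulVec, Matrix.one_mulVec]
  ext k
  simp only [Pi.add_apply, Pi.single_apply]
  fin_cases k <;> simp

theorem B_mulVec (K : Type*) [Field K] (a b c d e f g h i j : K) :
    (Bmat K).mulVec ![a, b, c, d, e, f, g, h, i, j] =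
      ![f, a, b, c, d, g, h, i, j, e] := by
  unfold Bmat
  simp only [Matrix.add_mulVec, Emat_mulVec]
  ext k
  simp only [Pi.add_apply, Pi.single_apply]
  fin_cases k <;> simp

theorem u_mulVec_one (K : Type*) [Field K] [CharP K 2] :
    (uMat K).mulVec ![0, 1, 0, 0, 0, 0, 0, 0, 0, 0] = ![0, 0, 0, 0, 0, 0, 0, 0, 1, 0] := by
  unfold uMat
  simp only [pow_succ, pow_zero, one_mul, ← Matrix.mulVec_mulVec, A_mulVec, B_mulVec]
  simp [CharTwo.add_self_eq_zero]

theorem u_mulVec_eight (K : Type*) [Field K] [CharP K 2] :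
    (uMat K).mulVec ![0, 0, 0, 0, 0, 0, 0, 0, 1, 0] = ![0, 1, 0, 0, 0, 0, 0, 0, 0, 0] := by
  unfold uMat
  simp only [pow_succ, pow_zero, one_mul, ← Matrix.mulVec_mulVec, A_mulVec, B_mulVec]
  simp [CharTwo.add_self_eq_zero]

/-- with `X = u − I`, there exists `v ∈ V` with `X²v = 0` and `β(v, Xv) ≠ 0`.
(Hence Hesselink's invariant `χ(2)` of `u` equals `1`, so `u` lies in the symplectic
unipotent class labelled `(2₁², 6₃)`.) -/
theorem statement8 (K : Type*) [Field K] [CharP K 2] :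
    ∃ v : Fin 10 → K, ((uMat K - 1) ^ 2).mulVec v = 0 ∧
      dotProduct v ((Jmat K).mulVec ((uMat K - 1).mulVec v)) ≠ 0 := by
  refine ⟨![0, 1, 0, 0, 0, 0, 0, 0, 0, 0], ?_, ?_⟩
  · rw [pow_two, ← Matrix.mulVec_mulVec, Matrix.sub_mulVec (uMat K) 1 ![0, 1, 0, 0, 0, 0, 0, 0, 0, 0],
      u_mulVec_one, Matrix.one_mulVec, Matrix.mulVec_sub, Matrix.sub_mulVec, Matrix.sub_mulVec,
      u_mulVec_one, u_mulVec_eight, Matrix.one_mulVec, Matrix.one_mulVec]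
    ext k
    fin_cases k <;> simp [CharTwo.sub_eq_add, CharTwo.add_self_eq_zero]
  · rw [Matrix.sub_mulVec, u_mulVec_one, Matrix.one_mulVec]
    simp [Jmat, dotProduct, Matrix.mulVec, Fin.sum_univ_succ]
end

section
/- Let X' = u' − I. For every v ∈ V with X'²v = 0, one has β(v, X'v) = 0. (Hence Hesselink's invariant χ(2) of u' equals 0, so u' lies in the symplectic unipotent class labelled (2₀², 6₃).) -/
open Matrix

lemma Amat_vec (K : Type*) [Field K] (a b c d e f g h i j : K) :
    Amat K *ᵥ ![a, b, c, d, e, f, g, h, i, j] = ![a + e + j, b, c, d, e, f + j, g, h, i, j] := by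
  simp only [Amat, Emat, add_mulVec, one_mulVec, single_mulVec]
  ext k
  fin_cases k <;> simp [Function.update, vecHead, vecTail]

lemma Bmat_vec (K : Type*) [Field K] (a b c d e f g h i j : K) :
    Bmat K *ᵥ ![a, b, c, d, e, f, g, h, i, j] = ![f, a, b, c, d, g, h, i, j, e] := by
  simp only [Bmat, Emat, add_mulVec, single_mulVec]
  ext k
  fin_cases k <;> simp [Function.update, vecHead, vecTail]

lemma Jmat_vec (K : Type*) [Field K] (a b c d e f g h i j : K) :
    Jmat K *ᵥ ![a, b, c, d, e, f, g, h, i, j] = ![j, i, h, g, f, e, d, c, b, a] := by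
  ext k
  fin_cases k <;> simp [Jmat, mulVec, dotProduct, Fin.sum_univ_succ]

lemma X_vec (K : Type*) [Field K] [CharP K 2] (a b c d e f g h i j : K) :
    (u'Mat K - 1) *ᵥ ![a, b, c, d, e, f, g, h, i, j] =
      ![c + e + i + j, c + i + j, g, b + c + g + h, 0, j, 0, b + c, c, 0] := by
  have h2 : (2 : K) = 0 := CharTwo.two_eq_zero
  simp only [u'Mat, sub_mulVec, one_mulVec, pow_succ, pow_zero, one_mul, ← mulVec_mulVec,
    Amat_vec, Bmat_vec]
  ext k
  fin_cases k <;> simp <;> grind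

/-- with `X' = u' − I`, for every `v ∈ V` with `X'²v = 0` one has
`β(v, X'v) = 0`. (Hence Hesselink's invariant `χ(2)` of `u'` equals `0`, so `u'` lies in
the symplectic unipotent class labelled `(2₀², 6₃)`.) -/
theorem statement9 (K : Type*) [Field K] [CharP K 2] :
    ∀ v : Fin 10 → K, ((u'Mat K - 1) ^ 2).mulVec v = 0 →
      dotProduct v ((Jmat K).mulVec ((u'Mat K - 1).mulVec v)) = 0 := by
  intro v hv
  have h2 : (2 : K) = 0 := CharTwo.two_eq_zero
  obtain ⟨a, b, c, d, e, f, g, h, i, j, rfl⟩ : ∃ a b c d e f g h i j : K,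
      v = ![a, b, c, d, e, f, g, h, i, j] :=
    ⟨v 0, v 1, v 2, v 3, v 4, v 5, v 6, v 7, v 8, v 9, by ext k; fin_cases k <;> rfl⟩
  rw [pow_two, ← mulVec_mulVec, X_vec, X_vec] at hv
  rw [X_vec, Jmat_vec]
  have e1 := congrFun hv 1
  have e3 := congrFun hv 3
  have e7 := congrFun hv 7
  have e8 := congrFun hv 8
  simp at e1 e3 e7 e8
  simp [dotProduct, Fin.sum_univ_succ]
  grind
end

section
/- For each x ∈ {u, u'}, setting X = x − I, one has: β(X³v, X⁴v) = 0 for all v ∈ V, and there exists v ∈ V with β(X²v, X³v) ≠ 0. (Hence Hesselink's invariant χ(6) equals 3 for both u and u', consistent with u and u' lying in the classes (2₁², 6₃) and (2₀², 6₃) respectively.) -/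
open Matrix

/-- Matrix over `ZMod 2` whose rows are given as bit masks. -/
def mk (r : List ℕ) : Matrix (Fin 10) (Fin 10) (ZMod 2) :=
  Matrix.of fun i j => if (r.getD i 0).testBit j then 1 else 0

/-- The matrix `(X^a)ᵀ J X^b` for `X = x - 1`. -/
def frm (x : Matrix (Fin 10) (Fin 10) (ZMod 2)) (a b : ℕ) : Matrix (Fin 10) (Fin 10) (ZMod 2) :=
  ((x - 1) ^ a)ᵀ * (Jmat (ZMod 2) * (x - 1) ^ b)

/-- `X³ᵀ J X⁴` is alternating, and `X²ᵀ J X³` has a nonzero diagonal entry. -/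
def Good (x : Matrix (Fin 10) (Fin 10) (ZMod 2)) : Prop :=
  (∀ i j, frm x 3 4 i j = frm x 3 4 j i) ∧ (∀ i, frm x 3 4 i i = 0) ∧ ∃ i, frm x 2 3 i i = 1

theorem zA : Amat (ZMod 2) = mk [529, 2, 4, 8, 16, 544, 64, 128, 256, 512] := by decide +kernel

theorem zB : Bmat (ZMod 2) = mk [32, 1, 2, 4, 8, 64, 128, 256, 512, 16] := by decide +kernel

theorem zJ : Jmat (ZMod 2) = mk [512, 256, 128, 64, 32, 16, 8, 4, 2, 1] := by decide +kernel

theorem zB2 : Bmat (ZMod 2) ^ 2 = mk [64, 32, 1, 2, 4, 128, 256, 512, 16, 8] := by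
  rw [pow_two, zB]; decide +kernel

theorem zB3 : Bmat (ZMod 2) ^ 3 = mk [128, 64, 32, 1, 2, 256, 512, 16, 8, 4] := by
  rw [pow_succ, zB2, zB]; decide +kernel

theorem zB4 : Bmat (ZMod 2) ^ 4 = mk [256, 128, 64, 32, 1, 512, 16, 8, 4, 2] := by
  rw [pow_succ, zB3, zB]; decide +kernel

theorem zB5 : Bmat (ZMod 2) ^ 5 = mk [512, 256, 128, 64, 32, 16, 8, 4, 2, 1] := by
  rw [pow_succ, zB4, zB]; decide +kernel

theorem zB6 : Bmat (ZMod 2) ^ 6 = mk [16, 512, 256, 128, 64, 8, 4, 2, 1, 32] := by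
  rw [pow_succ, zB5, zB]; decide +kernel

theorem zu : uMat (ZMod 2) - 1 = mk [560, 258, 132, 585, 57, 545, 72, 132, 258, 17] := by
  have h0 : mk [256, 128, 64, 32, 1, 512, 16, 8, 4, 2] * mk [529, 2, 4, 8, 16, 544, 64, 128, 256, 512] = mk [256, 128, 64, 544, 529, 512, 16, 8, 4, 2] := by decide +kernel
  have h1 : mk [256, 128, 64, 544, 529, 512, 16, 8, 4, 2] * mk [16, 512, 256, 128, 64, 8, 4, 2, 1, 32] = mk [1, 2, 4, 40, 112, 32, 64, 128, 256, 512] := by decide +kernel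
  have h2 : mk [1, 2, 4, 40, 112, 32, 64, 128, 256, 512] * mk [529, 2, 4, 8, 16, 544, 64, 128, 256, 512] = mk [529, 2, 4, 552, 624, 544, 64, 128, 256, 512] := by decide +kernel
  have h3 : mk [529, 2, 4, 552, 624, 544, 64, 128, 256, 512] * mk [512, 256, 128, 64, 32, 16, 8, 4, 2, 1] = mk [545, 256, 128, 81, 57, 17, 8, 4, 2, 1] := by decide +kernel
  have h4 : mk [545, 256, 128, 81, 57, 17, 8, 4, 2, 1] * mk [529, 2, 4, 8, 16, 544, 64, 128, 256, 512] = mk [561, 256, 128, 577, 41, 513, 8, 4, 2, 529] := by decide +kernel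
  have hx : mk [561, 256, 128, 577, 41, 513, 8, 4, 2, 529] - 1 = mk [560, 258, 132, 585, 57, 545, 72, 132, 258, 17] := by decide +kernel
  rw [uMat, zB6, zB5, zB4, zA, h0, h1, h2, h3, h4, hx]

theorem zu_2 : (uMat (ZMod 2) - 1) ^ 2 = mk [521, 0, 0, 32, 609, 0, 513, 0, 0, 521] := by
  rw [pow_two, zu]; decide +kernel

theorem zu_3 : (uMat (ZMod 2) - 1) ^ 3 = mk [104, 0, 0, 545, 72, 0, 545, 0, 0, 104] := by
  rw [pow_succ, zu_2, zu]; decide +kernel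

theorem zu_4 : (uMat (ZMod 2) - 1) ^ 4 = mk [32, 0, 0, 0, 513, 0, 0, 0, 0, 32] := by
  rw [pow_succ, zu_3, zu]; decide +kernel

theorem zu_M : frm (uMat (ZMod 2)) 3 4 = mk [0, 0, 0, 0, 0, 0, 0, 0, 0, 0] := by
  have h : mk [512, 256, 128, 64, 32, 16, 8, 4, 2, 1] * mk [32, 0, 0, 0, 513, 0, 0, 0, 0, 32] = mk [32, 0, 0, 0, 0, 513, 0, 0, 0, 32] := by decide +kernel
  rw [frm, zu_3, zu_4, zJ, h]; decide +kernel

theorem zu_N : frm (uMat (ZMod 2)) 2 3 = mk [545, 0, 0, 0, 0, 545, 0, 0, 0, 545] := by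
  have h : mk [512, 256, 128, 64, 32, 16, 8, 4, 2, 1] * mk [104, 0, 0, 545, 72, 0, 545, 0, 0, 104] = mk [104, 0, 0, 545, 0, 72, 545, 0, 0, 104] := by decide +kernel
  rw [frm, zu_2, zu_3, zJ, h]; decide +kernel

theorem zu_good : Good (uMat (ZMod 2)) := by
  refine ⟨?_, ?_, 0, ?_⟩
  · rw [zu_M, show mk [0, 0, 0, 0, 0, 0, 0, 0, 0, 0] = 0 by decide +kernel]
    intro i j
    rfl
  · rw [zu_M]; decide +kernel
  · rw [zu_N]; decide +kernel

theorem zu' : u'Mat (ZMod 2) - 1 = mk [788, 772, 64, 198, 0, 512, 0, 6, 4, 0] := by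
  have h0 : mk [32, 1, 2, 4, 8, 64, 128, 256, 512, 16] * mk [529, 2, 4, 8, 16, 544, 64, 128, 256, 512] = mk [544, 529, 2, 4, 8, 64, 128, 256, 512, 16] := by decide +kernel
  have h1 : mk [544, 529, 2, 4, 8, 64, 128, 256, 512, 16] * mk [64, 32, 1, 2, 4, 128, 256, 512, 16, 8] = mk [136, 76, 32, 1, 2, 256, 512, 16, 8, 4] := by decide +kernel
  have h2 : mk [136, 76, 32, 1, 2, 256, 512, 16, 8, 4] * mk [529, 2, 4, 8, 16, 544, 64, 128, 256, 512] = mk [136, 76, 544, 529, 2, 256, 512, 16, 8, 4] := by decide +kernel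
  have h3 : mk [136, 76, 544, 529, 2, 256, 512, 16, 8, 4] * mk [256, 128, 64, 32, 1, 512, 16, 8, 4, 2] = mk [40, 112, 514, 259, 128, 4, 2, 1, 32, 64] := by decide +kernel
  have h4 : mk [40, 112, 514, 259, 128, 4, 2, 1, 32, 64] * mk [529, 2, 4, 8, 16, 544, 64, 128, 256, 512] = mk [552, 624, 514, 787, 128, 4, 2, 529, 544, 64] := by decide +kernel
  have h5 : mk [552, 624, 514, 787, 128, 4, 2, 529, 544, 64] * mk [128, 64, 32, 1, 2, 256, 512, 16, 8, 4] = mk [261, 774, 68, 206, 16, 32, 64, 134, 260, 512] := by decide +kernel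
  have h6 : mk [261, 774, 68, 206, 16, 32, 64, 134, 260, 512] * mk [529, 2, 4, 8, 16, 544, 64, 128, 256, 512] = mk [789, 774, 68, 206, 16, 544, 64, 134, 260, 512] := by decide +kernel
  have hx : mk [789, 774, 68, 206, 16, 544, 64, 134, 260, 512] - 1 = mk [788, 772, 64, 198, 0, 512, 0, 6, 4, 0] := by decide +kernel
  rw [u'Mat, zB4, zB3, zB2, zB, zA, h0, h1, h2, h3, h4, h5, h6, hx]

theorem zu'_2 : (u'Mat (ZMod 2) - 1) ^ 2 = mk [68, 68, 0, 834, 0, 0, 0, 836, 64, 0] := by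
  rw [pow_two, zu']; decide +kernel

theorem zu'_3 : (u'Mat (ZMod 2) - 1) ^ 3 = mk [64, 64, 0, 768, 0, 0, 0, 68, 0, 0] := by
  rw [pow_succ, zu'_2, zu']; decide +kernel

theorem zu'_4 : (u'Mat (ZMod 2) - 1) ^ 4 = mk [0, 0, 0, 4, 0, 0, 0, 64, 0, 0] := by
  rw [pow_succ, zu'_3, zu']; decide +kernel

theorem zu'_M : frm (u'Mat (ZMod 2)) 3 4 = mk [0, 0, 0, 0, 0, 0, 0, 0, 0, 0] := by
  have h : mk [512, 256, 128, 64, 32, 16, 8, 4, 2, 1] * mk [0, 0, 0, 4, 0, 0, 0, 64, 0, 0] = mk [0, 0, 64, 0, 0, 0, 4, 0, 0, 0] := by decide +kernel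
  rw [frm, zu'_3, zu'_4, zJ, h]; decide +kernel

theorem zu'_N : frm (u'Mat (ZMod 2)) 2 3 = mk [0, 0, 0, 0, 0, 0, 64, 0, 0, 0] := by
  have h : mk [512, 256, 128, 64, 32, 16, 8, 4, 2, 1] * mk [64, 64, 0, 768, 0, 0, 0, 68, 0, 0] = mk [0, 0, 68, 0, 0, 0, 768, 0, 64, 64] := by decide +kernel
  rw [frm, zu'_2, zu'_3, zJ, h]; decide +kernel

theorem zu'_good : Good (u'Mat (ZMod 2)) := by
  refine ⟨?_, ?_, 6, ?_⟩
  · rw [zu'_M, show mk [0, 0, 0, 0, 0, 0, 0, 0, 0, 0] = 0 by decide +kernel]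
    intro i j
    rfl
  · rw [zu'_M]; decide +kernel
  · rw [zu'_N]; decide +kernel

section
variable (K : Type*) [Field K] [CharP K 2]

/-- Base change from `ZMod 2` to `K`. -/
noncomputable def bc : Matrix (Fin 10) (Fin 10) (ZMod 2) →+* Matrix (Fin 10) (Fin 10) K :=
  (ZMod.castHom (dvd_refl 2) K).mapMatrix

theorem bc_apply (M : Matrix (Fin 10) (Fin 10) (ZMod 2)) (i j : Fin 10) :
    bc K M i j = ZMod.castHom (dvd_refl 2) K (M i j) := rfl

theorem bc_transpose (M : Matrix (Fin 10) (Fin 10) (ZMod 2)) : bc K Mᵀ = (bc K M)ᵀ := rfl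

theorem bc_E (i j : Fin 10) : bc K (Emat (ZMod 2) i j) = Emat K i j := by
  ext a b
  rw [bc_apply, Emat, Emat, Matrix.single_apply, Matrix.single_apply]
  split_ifs
  · exact map_one _
  · exact map_zero _

theorem bc_J : bc K (Jmat (ZMod 2)) = Jmat K := by
  ext a b
  rw [bc_apply, Jmat, Jmat, Matrix.of_apply, Matrix.of_apply]
  split_ifs
  · exact map_one _
  · exact map_zero _

theorem bc_A : bc K (Amat (ZMod 2)) = Amat K := by
  simp only [Amat, map_add, map_one, bc_E]

theorem bc_B : bc K (Bmat (ZMod 2)) = Bmat K := by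
  simp only [Bmat, map_add, bc_E]

theorem bc_u : bc K (uMat (ZMod 2)) = uMat K := by
  simp only [uMat, map_mul, map_pow, bc_A, bc_B]

theorem bc_u' : bc K (u'Mat (ZMod 2)) = u'Mat K := by
  simp only [u'Mat, map_mul, map_pow, bc_A, bc_B]

variable {K}

theorem alt_zero (M : Matrix (Fin 10) (Fin 10) K) (hs : ∀ i j, M i j = M j i)
    (hd : ∀ i, M i i = 0) (v : Fin 10 → K) : v ⬝ᵥ (M *ᵥ v) = 0 := by
  simp only [dotProduct, mulVec, Finset.mul_sum]
  rw [← Finset.sum_product']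
  refine Finset.sum_involution (fun p _ => (p.2, p.1)) ?_ ?_ ?_ ?_
  · rintro ⟨i, j⟩ -
    have : v j * (M j i * v i) = v i * (M i j * v j) := by rw [hs j i]; ring
    simp only [this, CharTwo.add_self_eq_zero]
  · rintro ⟨i, j⟩ - h h2
    apply h
    have : j = i := congrArg Prod.fst h2
    subst this
    simp [hd]
  · intros; simp
  · intros; rfl

theorem form_eq (P Q J : Matrix (Fin 10) (Fin 10) K) (v : Fin 10 → K) :
    (P *ᵥ v) ⬝ᵥ (J *ᵥ (Q *ᵥ v)) = v ⬝ᵥ ((Pᵀ * (J * Q)) *ᵥ v) := by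
  rw [← mulVec_mulVec, ← mulVec_mulVec, dotProduct_mulVec v, vecMul_transpose]

theorem good_main (x : Matrix (Fin 10) (Fin 10) (ZMod 2)) (h : Good x) :
    (∀ v : Fin 10 → K,
        dotProduct (((bc K x - 1) ^ 3).mulVec v)
          ((Jmat K).mulVec (((bc K x - 1) ^ 4).mulVec v)) = 0) ∧
      ∃ v : Fin 10 → K,
        dotProduct (((bc K x - 1) ^ 2).mulVec v)
          ((Jmat K).mulVec (((bc K x - 1) ^ 3).mulVec v)) ≠ 0 := by
  obtain ⟨hs, hd, i, hi⟩ := h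
  have key : ∀ a b : ℕ, ((bc K x - 1) ^ a)ᵀ * (Jmat K * (bc K x - 1) ^ b)
      = bc K (frm x a b) := by
    intro a b
    simp only [frm, map_mul, map_pow, map_sub, map_one, bc_transpose, bc_J]
  constructor
  · intro v
    rw [form_eq, key]
    apply alt_zero
    · intro a b
      rw [bc_apply, bc_apply, hs]
    · intro a
      rw [bc_apply, hd, map_zero]
  · refine ⟨Pi.single i 1, ?_⟩
    rw [form_eq, key]
    simp only [mulVec_single_one, single_one_dotProduct, col_apply]
    rw [bc_apply, hi, map_one]
    exact one_ne_zero

end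

/-- for each `x ∈ {u, u'}`, setting `X = x − I`, one has
`β(X³v, X⁴v) = 0` for all `v ∈ V`, and there exists `v ∈ V` with `β(X²v, X³v) ≠ 0`.
(Hence Hesselink's invariant `χ(6)` equals `3` for both `u` and `u'`.) -/
theorem statement10 (K : Type*) [Field K] [CharP K 2] :
    ∀ x ∈ ({uMat K, u'Mat K} : Set (Matrix (Fin 10) (Fin 10) K)),
      (∀ v : Fin 10 → K,
        dotProduct (((x - 1) ^ 3).mulVec v) ((Jmat K).mulVec (((x - 1) ^ 4).mulVec v)) = 0) ∧
      ∃ v : Fin 10 → K,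
        dotProduct (((x - 1) ^ 2).mulVec v) ((Jmat K).mulVec (((x - 1) ^ 3).mulVec v)) ≠ 0 := by
  rintro x (rfl | rfl)
  · rw [← bc_u]
    exact good_main _ zu_good
  · rw [← bc_u']
    exact good_main _ zu'_good
end
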